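/- Let Λ₁ ∈ S^k₊ and Λ₂ ∈ S^m₊ with Moore–Penrose pseudoinverses Λ₁†, Λ₂†, let X ∈ Sⁿ₊ with Moore–Penrose pseudoinverse X†, and let u ∈ ℝ^{n×k}, W ∈ ℝ^{n×m}. Then (1/2)·(uΛ₁)·(X(uΛ₁)) + (1/2)·(WΛ₂)·(X(WΛ₂)) is the least upper bound of the set { Y·u + Z·W − [(1/2)·(YΛ₁†)·(X†(YΛ₁†)) + (1/2)·(ZΛ₂†)·(X†(ZΛ₂†))] : Y ∈ ℝ^{n×k}, Z ∈ ℝ^{n×m} with range(Yᵀ) ⊆ range(Λ₁), range(Zᵀ) ⊆ range(Λ₂), range(Y) ⊆ range(X), range(Z) ⊆ range(X) }, and the supremum is attained at Y = X u Λ₁², Z = X W Λ₂². (Pointwise Legendre conjugate of the weighted action integrand.) -/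

import Mathlib

/-!
The pairs `(Y, Λ₁)` and `(Z, Λ₂)` decouple, so it suffices to treat one block. Substitute
`V = Y Λ†` and `T = u Λᵀ`. The range conditions on `Y` say that `Y Λ† Λ = Y` and `X X† Y = Y`, so
that `Y · u = V · T` and `X X† V = V`. Completing the square then gives

  `½ T · X T - (V · T - ½ V · X† V) = ½ (X† V - T) · (V - X T) = ½ (X† V - T) · X (X† V - T)`,

which is nonnegative because `X` is positive semidefinite, and vanishes when `V = X T`. Since
`Λᵀ Λ Λ† = Λᵀ`, this is the case for `Y = X u Λᵀ Λ`, which is `X u Λ²` when `Λ` is symmetric.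
-/

open Matrix

/-- The Frobenius inner product `A · B = trace (Aᵀ * B)` of two real matrices. -/
noncomputable def frobInner {p q : ℕ} (A B : Matrix (Fin p) (Fin q) ℝ) : ℝ :=
  (Aᵀ * B).trace

/-- `X` is the Moore–Penrose pseudoinverse of `A`. -/
def IsMoorePenrose {p q : ℕ} (A : Matrix (Fin p) (Fin q) ℝ) (X : Matrix (Fin q) (Fin p) ℝ) :
    Prop :=
  (X * A)ᵀ = X * A ∧ (A * X)ᵀ = A * X ∧ X * A * X = X ∧ A * X * A = A

section Range

variable {R l m n : Type*} [CommSemiring R] [Fintype m] [Fintype n]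

lemma range_mulVecLin_mul_le (A : Matrix l m R) (B : Matrix m n R) :
    LinearMap.range (A * B).mulVecLin ≤ LinearMap.range A.mulVecLin := by
  rw [mulVecLin_mul]
  exact LinearMap.range_comp_le_range _ _

lemma mul_mul_eq_of_range_le [Fintype l] {A : Matrix l m R} {G : Matrix m l R} {Y : Matrix l n R}
    (hG : A * G * A = A) (hY : LinearMap.range Y.mulVecLin ≤ LinearMap.range A.mulVecLin) :
    A * G * Y = Y := by
  classical
  refine ext_of_mulVec_single fun j ↦ ?_
  obtain ⟨x, hx : A *ᵥ x = Y *ᵥ Pi.single j 1⟩ := hY ⟨Pi.single j 1, rfl⟩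
  rw [← mulVec_mulVec, ← hx, mulVec_mulVec, hG]

lemma mul_mul_eq_of_range_transpose_le [Fintype l] {A : Matrix m l R} {G : Matrix l m R}
    {Y : Matrix n l R} (hG : A * G * A = A)
    (hY : LinearMap.range Yᵀ.mulVecLin ≤ LinearMap.range Aᵀ.mulVecLin) : Y * G * A = Y := by
  have hGt : Aᵀ * Gᵀ * Aᵀ = Aᵀ := by
    rw [← transpose_mul, ← transpose_mul, ← Matrix.mul_assoc, hG]
  apply transpose_injective
  rw [transpose_mul, transpose_mul, ← Matrix.mul_assoc, mul_mul_eq_of_range_le hGt hY]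

end Range

lemma IsMoorePenrose.transpose_mul_mul {p q : ℕ} {A : Matrix (Fin p) (Fin q) ℝ}
    {G : Matrix (Fin q) (Fin p) ℝ} (hG : IsMoorePenrose A G) : Aᵀ * A * G = Aᵀ := by
  obtain ⟨-, hAG, -, hAGA⟩ := hG
  calc Aᵀ * A * G = Aᵀ * (A * G)ᵀ := by rw [hAG, Matrix.mul_assoc]
    _ = Aᵀ := by rw [← transpose_mul, hAGA]

section FrobInner

variable {p q r : ℕ}

lemma frobInner_comm (A B : Matrix (Fin p) (Fin q) ℝ) : frobInner A B = frobInner B A := by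
  rw [frobInner, ← trace_transpose, transpose_mul, transpose_transpose, frobInner]

lemma frobInner_sub_left (A B C : Matrix (Fin p) (Fin q) ℝ) :
    frobInner (A - B) C = frobInner A C - frobInner B C := by
  simp only [frobInner, transpose_sub, Matrix.sub_mul, trace_sub]

lemma frobInner_sub_right (A B C : Matrix (Fin p) (Fin q) ℝ) :
    frobInner A (B - C) = frobInner A B - frobInner A C := by
  simp only [frobInner, Matrix.mul_sub, trace_sub]

lemma frobInner_zero_right (A : Matrix (Fin p) (Fin q) ℝ) : frobInner A 0 = 0 := by
  rw [frobInner, Matrix.mul_zero, trace_zero]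

lemma frobInner_mul_left (A : Matrix (Fin p) (Fin q) ℝ) (B : Matrix (Fin q) (Fin r) ℝ)
    (C : Matrix (Fin p) (Fin r) ℝ) : frobInner (A * B) C = frobInner B (Aᵀ * C) := by
  rw [frobInner, transpose_mul, Matrix.mul_assoc, frobInner]

lemma frobInner_mul_right (A : Matrix (Fin p) (Fin q) ℝ) (B : Matrix (Fin q) (Fin r) ℝ)
    (C : Matrix (Fin p) (Fin r) ℝ) : frobInner (A * B) C = frobInner A (C * Bᵀ) := by
  rw [frobInner, transpose_mul, Matrix.mul_assoc, trace_mul_comm, Matrix.mul_assoc, frobInner]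

lemma frobInner_mul_self_nonneg {X : Matrix (Fin p) (Fin p) ℝ} (hX : X.PosSemidef)
    (Q : Matrix (Fin p) (Fin q) ℝ) : 0 ≤ frobInner Q (X * Q) := by
  have hQXQ := (hX.conjTranspose_mul_mul_same Q).trace_nonneg
  rwa [conjTranspose_eq_transpose_of_trivial, Matrix.mul_assoc] at hQXQ

lemma half_frobInner_sub_eq_completed_square {X H : Matrix (Fin p) (Fin p) ℝ} (hX : X.IsSymm)
    {V : Matrix (Fin p) (Fin q) ℝ} (hV : X * (H * V) = V) (T : Matrix (Fin p) (Fin q) ℝ) :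
    (1 / 2) * frobInner T (X * T) - (frobInner V T - (1 / 2) * frobInner V (H * V)) =
      (1 / 2) * frobInner (H * V - T) (V - X * T) := by
  have hcross : frobInner (H * V) (X * T) = frobInner V T := by
    rw [← hX.eq, ← frobInner_mul_left, hV]
  rw [frobInner_sub_left, frobInner_sub_right, frobInner_sub_right, hcross,
    frobInner_comm (H * V) V, frobInner_comm T V]
  ring

end FrobInner

section WeightedAction

variable {n k l : ℕ}

/-- The weighted action `½ (Y L) · (X (Y L))`. It serves both for the quadratic form in the
conjugate variable `u` (`X` and `L = Λᵀ`) and for the action integrand in the flux `Y`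
(`X†` and `L = Λ†`). -/
noncomputable def weightedAction (X : Matrix (Fin n) (Fin n) ℝ) (L : Matrix (Fin k) (Fin l) ℝ)
    (Y : Matrix (Fin n) (Fin k) ℝ) : ℝ :=
  (1 / 2) * frobInner (Y * L) (X * (Y * L))

/-- The effective domain of the action integrand: the fluxes `Y` whose rows lie in the row space
of `Λ` and whose columns lie in the column space of `X`. For symmetric `Λ` the first condition is
the usual `range Yᵀ ⊆ range Λ`. -/
def IsAdmissibleFlux (Λ : Matrix (Fin l) (Fin k) ℝ) (X : Matrix (Fin n) (Fin n) ℝ)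
    (Y : Matrix (Fin n) (Fin k) ℝ) : Prop :=
  LinearMap.range Yᵀ.mulVecLin ≤ LinearMap.range Λᵀ.mulVecLin ∧
    LinearMap.range Y.mulVecLin ≤ LinearMap.range X.mulVecLin

variable {Λ : Matrix (Fin l) (Fin k) ℝ} {Λd : Matrix (Fin k) (Fin l) ℝ}
  {X Xd : Matrix (Fin n) (Fin n) ℝ} {Y : Matrix (Fin n) (Fin k) ℝ}

lemma isAdmissibleFlux_mul_transpose_mul (Λ : Matrix (Fin l) (Fin k) ℝ)
    (X : Matrix (Fin n) (Fin n) ℝ) (u : Matrix (Fin n) (Fin k) ℝ) :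
    IsAdmissibleFlux Λ X (X * u * (Λᵀ * Λ)) := by
  constructor
  · rw [transpose_mul, transpose_mul, transpose_transpose, Matrix.mul_assoc]
    exact range_mulVecLin_mul_le _ _
  · rw [Matrix.mul_assoc]
    exact range_mulVecLin_mul_le _ _

lemma IsAdmissibleFlux.weightedAction_sub_eq_completed_square (hY : IsAdmissibleFlux Λ X Y)
    (hX : X.IsSymm) (hΛd : Λ * Λd * Λ = Λ) (hXd : X * Xd * X = X)
    (u : Matrix (Fin n) (Fin k) ℝ) :
    weightedAction X Λᵀ u - (frobInner Y u - weightedAction Xd Λd Y) =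
      (1 / 2) * frobInner (Xd * (Y * Λd) - u * Λᵀ) (Y * Λd - X * (u * Λᵀ)) := by
  have hYu : frobInner Y u = frobInner (Y * Λd) (u * Λᵀ) := by
    rw [← frobInner_mul_right, mul_mul_eq_of_range_transpose_le hΛd hY.1]
  have hV : X * (Xd * (Y * Λd)) = Y * Λd := by
    rw [← Matrix.mul_assoc, ← Matrix.mul_assoc, mul_mul_eq_of_range_le hXd hY.2]
  rw [hYu]
  exact half_frobInner_sub_eq_completed_square hX hV (u * Λᵀ)

lemma IsAdmissibleFlux.frobInner_sub_weightedAction_le (hY : IsAdmissibleFlux Λ X Y)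
    (hX : X.PosSemidef) (hΛd : Λ * Λd * Λ = Λ) (hXd : X * Xd * X = X)
    (u : Matrix (Fin n) (Fin k) ℝ) :
    frobInner Y u - weightedAction Xd Λd Y ≤ weightedAction X Λᵀ u := by
  have hsquare := hY.weightedAction_sub_eq_completed_square
    (isHermitian_iff_isSymm.1 hX.isHermitian) hΛd hXd u
  have hresidual : Y * Λd - X * (u * Λᵀ) = X * (Xd * (Y * Λd) - u * Λᵀ) := by
    rw [Matrix.mul_sub, ← Matrix.mul_assoc X Xd, ← Matrix.mul_assoc (X * Xd) Y,
      mul_mul_eq_of_range_le hXd hY.2]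
  rw [hresidual] at hsquare
  have hnonneg := frobInner_mul_self_nonneg hX (Xd * (Y * Λd) - u * Λᵀ)
  linarith

lemma frobInner_sub_weightedAction_mul_transpose_mul (hX : X.IsSymm) (hΛd : IsMoorePenrose Λ Λd)
    (hXd : X * Xd * X = X) (u : Matrix (Fin n) (Fin k) ℝ) :
    frobInner (X * u * (Λᵀ * Λ)) u - weightedAction Xd Λd (X * u * (Λᵀ * Λ)) =
      weightedAction X Λᵀ u := by
  have hsquare := (isAdmissibleFlux_mul_transpose_mul Λ X u).weightedAction_sub_eq_completed_square
    hX hΛd.2.2.2 hXd u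
  have hV : X * u * (Λᵀ * Λ) * Λd = X * (u * Λᵀ) := by
    rw [Matrix.mul_assoc, hΛd.transpose_mul_mul, Matrix.mul_assoc]
  have hresidual : X * u * (Λᵀ * Λ) * Λd - X * (u * Λᵀ) = 0 := sub_eq_zero.2 hV
  rw [hresidual, frobInner_zero_right, mul_zero] at hsquare
  exact (sub_eq_zero.1 hsquare).symm

end WeightedAction

theorem legendre_conjugate_weighted_action_general {n k l k' l' : ℕ}
    {Λ₁ : Matrix (Fin l) (Fin k) ℝ} {Λ₁d : Matrix (Fin k) (Fin l) ℝ}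
    {Λ₂ : Matrix (Fin l') (Fin k') ℝ} {Λ₂d : Matrix (Fin k') (Fin l') ℝ}
    {X Xd : Matrix (Fin n) (Fin n) ℝ}
    (u : Matrix (Fin n) (Fin k) ℝ) (W : Matrix (Fin n) (Fin k') ℝ) (hX : X.PosSemidef)
    (hΛ₁d : IsMoorePenrose Λ₁ Λ₁d) (hΛ₂d : IsMoorePenrose Λ₂ Λ₂d) (hXd : IsMoorePenrose X Xd) :
    IsLUB {r : ℝ | ∃ (Y : Matrix (Fin n) (Fin k) ℝ) (Z : Matrix (Fin n) (Fin k') ℝ),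
        LinearMap.range Yᵀ.mulVecLin ≤ LinearMap.range Λ₁ᵀ.mulVecLin ∧
        LinearMap.range Zᵀ.mulVecLin ≤ LinearMap.range Λ₂ᵀ.mulVecLin ∧
        LinearMap.range Y.mulVecLin ≤ LinearMap.range X.mulVecLin ∧
        LinearMap.range Z.mulVecLin ≤ LinearMap.range X.mulVecLin ∧
        r = frobInner Y u + frobInner Z W -
          (weightedAction Xd Λ₁d Y + weightedAction Xd Λ₂d Z)}
      (weightedAction X Λ₁ᵀ u + weightedAction X Λ₂ᵀ W) ∧
    (LinearMap.range (X * u * (Λ₁ᵀ * Λ₁))ᵀ.mulVecLin ≤ LinearMap.range Λ₁ᵀ.mulVecLin ∧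
      LinearMap.range (X * W * (Λ₂ᵀ * Λ₂))ᵀ.mulVecLin ≤ LinearMap.range Λ₂ᵀ.mulVecLin ∧
      LinearMap.range (X * u * (Λ₁ᵀ * Λ₁)).mulVecLin ≤ LinearMap.range X.mulVecLin ∧
      LinearMap.range (X * W * (Λ₂ᵀ * Λ₂)).mulVecLin ≤ LinearMap.range X.mulVecLin) ∧
    frobInner (X * u * (Λ₁ᵀ * Λ₁)) u + frobInner (X * W * (Λ₂ᵀ * Λ₂)) W -
        (weightedAction Xd Λ₁d (X * u * (Λ₁ᵀ * Λ₁)) +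
          weightedAction Xd Λ₂d (X * W * (Λ₂ᵀ * Λ₂))) =
      weightedAction X Λ₁ᵀ u + weightedAction X Λ₂ᵀ W := by
  have hXs : X.IsSymm := isHermitian_iff_isSymm.1 hX.isHermitian
  obtain ⟨huΛ, huX⟩ := isAdmissibleFlux_mul_transpose_mul Λ₁ X u
  obtain ⟨hWΛ, hWX⟩ := isAdmissibleFlux_mul_transpose_mul Λ₂ X W
  have hvalue : frobInner (X * u * (Λ₁ᵀ * Λ₁)) u + frobInner (X * W * (Λ₂ᵀ * Λ₂)) W -
        (weightedAction Xd Λ₁d (X * u * (Λ₁ᵀ * Λ₁)) +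
          weightedAction Xd Λ₂d (X * W * (Λ₂ᵀ * Λ₂))) =
      weightedAction X Λ₁ᵀ u + weightedAction X Λ₂ᵀ W := by
    rw [add_sub_add_comm, frobInner_sub_weightedAction_mul_transpose_mul hXs hΛ₁d hXd.2.2.2,
      frobInner_sub_weightedAction_mul_transpose_mul hXs hΛ₂d hXd.2.2.2]
  refine ⟨IsGreatest.isLUB ⟨⟨_, _, huΛ, hWΛ, huX, hWX, hvalue.symm⟩, ?_⟩,
    ⟨huΛ, hWΛ, huX, hWX⟩, hvalue⟩
  rintro _ ⟨Y, Z, hYΛ, hZΛ, hYX, hZX, rfl⟩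
  have hY : IsAdmissibleFlux Λ₁ X Y := ⟨hYΛ, hYX⟩
  have hZ : IsAdmissibleFlux Λ₂ X Z := ⟨hZΛ, hZX⟩
  rw [add_sub_add_comm]
  exact add_le_add (hY.frobInner_sub_weightedAction_le hX hΛ₁d.2.2.2 hXd.2.2.2 u)
    (hZ.frobInner_sub_weightedAction_le hX hΛ₂d.2.2.2 hXd.2.2.2 W)

/-- **Pointwise Legendre conjugate of the weighted action integrand.**
`½ (uΛ₁)·(X(uΛ₁)) + ½ (WΛ₂)·(X(WΛ₂))` is the least upper bound of
`Y·u + Z·W − [½ (YΛ₁†)·(X†(YΛ₁†)) + ½ (ZΛ₂†)·(X†(ZΛ₂†))]` over all admissible `(Y, Z)`,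
and the supremum is attained at `Y = X u Λ₁²`, `Z = X W Λ₂²`. -/
theorem legendre_conjugate_weighted_action (n k m : ℕ)
    (Λ₁ Λ₁d : Matrix (Fin k) (Fin k) ℝ) (Λ₂ Λ₂d : Matrix (Fin m) (Fin m) ℝ)
    (X Xd : Matrix (Fin n) (Fin n) ℝ)
    (u : Matrix (Fin n) (Fin k) ℝ) (W : Matrix (Fin n) (Fin m) ℝ)
    (hΛ₁ : Λ₁.PosSemidef) (hΛ₂ : Λ₂.PosSemidef) (hX : X.PosSemidef)
    (hΛ₁d : IsMoorePenrose Λ₁ Λ₁d) (hΛ₂d : IsMoorePenrose Λ₂ Λ₂d)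
    (hXd : IsMoorePenrose X Xd) :
    IsLUB {r : ℝ | ∃ (Y : Matrix (Fin n) (Fin k) ℝ) (Z : Matrix (Fin n) (Fin m) ℝ),
        LinearMap.range (Yᵀ).mulVecLin ≤ LinearMap.range Λ₁.mulVecLin ∧
        LinearMap.range (Zᵀ).mulVecLin ≤ LinearMap.range Λ₂.mulVecLin ∧
        LinearMap.range Y.mulVecLin ≤ LinearMap.range X.mulVecLin ∧
        LinearMap.range Z.mulVecLin ≤ LinearMap.range X.mulVecLin ∧
        r = frobInner Y u + frobInner Z W -
          ((1 / 2) * frobInner (Y * Λ₁d) (Xd * (Y * Λ₁d)) +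
            (1 / 2) * frobInner (Z * Λ₂d) (Xd * (Z * Λ₂d)))}
      ((1 / 2) * frobInner (u * Λ₁) (X * (u * Λ₁)) +
        (1 / 2) * frobInner (W * Λ₂) (X * (W * Λ₂))) ∧
    (LinearMap.range ((X * u * Λ₁ ^ 2)ᵀ).mulVecLin ≤ LinearMap.range Λ₁.mulVecLin ∧
      LinearMap.range ((X * W * Λ₂ ^ 2)ᵀ).mulVecLin ≤ LinearMap.range Λ₂.mulVecLin ∧
      LinearMap.range (X * u * Λ₁ ^ 2).mulVecLin ≤ LinearMap.range X.mulVecLin ∧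
      LinearMap.range (X * W * Λ₂ ^ 2).mulVecLin ≤ LinearMap.range X.mulVecLin) ∧
    frobInner (X * u * Λ₁ ^ 2) u + frobInner (X * W * Λ₂ ^ 2) W -
        ((1 / 2) * frobInner ((X * u * Λ₁ ^ 2) * Λ₁d) (Xd * ((X * u * Λ₁ ^ 2) * Λ₁d)) +
          (1 / 2) * frobInner ((X * W * Λ₂ ^ 2) * Λ₂d) (Xd * ((X * W * Λ₂ ^ 2) * Λ₂d))) =
      (1 / 2) * frobInner (u * Λ₁) (X * (u * Λ₁)) +
        (1 / 2) * frobInner (W * Λ₂) (X * (W * Λ₂)) := by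
  simpa only [weightedAction, (isHermitian_iff_isSymm.1 hΛ₁.isHermitian).eq, ← sq,
    (isHermitian_iff_isSymm.1 hΛ₂.isHermitian).eq] using
    legendre_conjugate_weighted_action_general u W hX hΛ₁d hΛ₂d hXd
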